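/- arXiv:2006.15043 — 2 statements merged into one kernel-verified Lean document; each statement's English description precedes it below -/
import Mathlib

section
/- Let X be a random vector in ℝ^D whose restriction to the ℓ∞-ball B(x,τ_0) has a Lebesgue density f_X satisfying |f_X(z) − f_X(x)| ≤ L‖z − x‖_∞ for all z ∈ B(x,τ_0). For 0 < τ ≤ τ_0, define μ(τ) = E[(X − x) 1_{B(x,τ)}(X)] ∈ ℝ^D. Then for every coordinate j ∈ {1,…,D}: |μ_j(τ)| ≤ (L/8) (2τ)^{2+D}. -/
open MeasureTheory

/-!
Write `B = B(x,τ)` and let `g = max f 0` be the nonnegative part of `f`, which is the actual density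
on the ball and inherits the Lipschitz bound at `x`. Then `μ_j(τ) = ∫_B (z_j - x_j) g(z) dz`, and
since `z_j - x_j` integrates to zero over `B` by symmetry, `g(z)` may be replaced by `g(z) - g(x)`.
The integrand is then at most `|z_j - x_j| · L τ` in absolute value, and Fubini
(`integral_closedBall_coord`) gives `∫_B |z_j - x_j| dz = (2τ)^(D-1) τ²`, so the bound is
`L τ³ (2τ)^(D-1) = (L/8) (2τ)^(D+2)`.
-/

/-- Fubini on the sup-norm ball for a function of one coordinate: the other `D - 1` coordinates
each contribute a factor `2τ`. -/
lemma integral_closedBall_coord {D : ℕ} (x : Fin D → ℝ) {τ : ℝ} (hτ : 0 < τ) (j : Fin D)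
    {φ : ℝ → ℝ} (hφ : Continuous φ) :
    ∫ z in Metric.closedBall x τ, φ (z j - x j) = (2 * τ) ^ (D - 1) * ∫ t in (-τ)..τ, φ t := by
  rw [closedBall_pi x hτ.le, volume_pi, Measure.restrict_pi_pi]
  have hmap := Measure.pi_map_eval
    (μ := fun i => (volume : Measure ℝ).restrict (Metric.closedBall (x i) τ)) j
  have hc : Continuous fun t => φ (t - x j) := by fun_prop
  have h1 := integral_map (μ := Measure.pi
      fun i => (volume : Measure ℝ).restrict (Metric.closedBall (x i) τ))
    (φ := Function.eval j) (measurable_pi_apply j).aemeasurable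
    (f := fun t => φ (t - x j)) hc.aestronglyMeasurable
  refine h1.symm.trans ?_
  rw [hmap, integral_smul_measure]
  have h2 : ∫ t in Metric.closedBall (x j) τ, φ (t - x j) = ∫ t in (-τ)..τ, φ t := by
    rw [Real.closedBall_eq_Icc, integral_Icc_eq_integral_Ioc,
      ← intervalIntegral.integral_of_le (by linarith),
      intervalIntegral.integral_comp_sub_right (fun t => φ t)]
    congr 1 <;> ring
  rw [h2]
  simp [Real.volume_closedBall, Finset.card_erase_of_mem, hτ.le]

lemma integral_abs_symm {τ : ℝ} (hτ : 0 < τ) : ∫ t in (-τ)..τ, |t| = τ ^ 2 := by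
  have hc : Continuous fun t : ℝ => |t| := continuous_abs
  rw [← intervalIntegral.integral_add_adjacent_intervals (b := 0)
    (hc.intervalIntegrable _ _) (hc.intervalIntegrable _ _)]
  have h1 : ∫ t in (-τ)..0, |t| = ∫ t in (-τ)..0, -t := by
    apply intervalIntegral.integral_congr
    intro t ht
    rw [Set.uIcc_of_le (by linarith)] at ht
    exact abs_of_nonpos ht.2
  have h2 : ∫ t in (0 : ℝ)..τ, |t| = ∫ t in (0 : ℝ)..τ, t := by
    apply intervalIntegral.integral_congr
    intro t ht
    rw [Set.uIcc_of_le hτ.le] at ht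
    exact abs_of_nonneg ht.1
  rw [h1, h2, intervalIntegral.integral_neg, integral_id, integral_id]
  ring

/-- Let `X` be a random vector in `ℝ^D` whose restriction to the ℓ∞-ball
`B(x,τ_0)` has a Lebesgue density `f_X` satisfying `|f_X(z) − f_X(x)| ≤ L‖z − x‖_∞` for all
`z ∈ B(x,τ_0)`. For `0 < τ ≤ τ_0`, define `μ(τ) = E[(X − x) 1_{B(x,τ)}(X)] ∈ ℝ^D`. Then for
every coordinate `j`: `|μ_j(τ)| ≤ (L/8)(2τ)^{2+D}`.

(The sup metric on `Fin D → ℝ` makes `Metric.closedBall` the ℓ∞-ball.) -/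
theorem stmt_17 {Ω : Type*} [MeasurableSpace Ω] (P : Measure Ω) [IsProbabilityMeasure P]
    (D : ℕ) (x : Fin D → ℝ) (X : Ω → Fin D → ℝ) (hX : Measurable X)
    (τ0 L : ℝ) (hτ0 : 0 < τ0) (hL : 0 ≤ L)
    (f : (Fin D → ℝ) → ℝ) (hf : Measurable f)
    (hdens : (Measure.map X P).restrict (Metric.closedBall x τ0) =
      ((volume : Measure (Fin D → ℝ)).restrict (Metric.closedBall x τ0)).withDensity
        fun z => ENNReal.ofReal (f z))
    (hLip : ∀ z ∈ Metric.closedBall x τ0, |f z - f x| ≤ L * ‖z - x‖)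
    (τ : ℝ) (hτpos : 0 < τ) (hττ0 : τ ≤ τ0) (j : Fin D) :
    |∫ ω, Set.indicator (Metric.closedBall x τ) (fun z => z j - x j) (X ω) ∂P| ≤
      L / 8 * (2 * τ) ^ (2 + D) := by
  set B := Metric.closedBall x τ with hB
  have hBm : MeasurableSet B := Metric.isClosed_closedBall.measurableSet
  have hsub : B ⊆ Metric.closedBall x τ0 := Metric.closedBall_subset_closedBall hττ0
  have hcoord : Continuous fun z : Fin D → ℝ => z j - x j := by fun_prop
  have hdensB : (Measure.map X P).restrict B =
      ((volume : Measure (Fin D → ℝ)).restrict B).withDensity fun z => ENNReal.ofReal (f z) := by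
    have h := congrArg (fun m => Measure.restrict m B) hdens
    simpa only [restrict_withDensity hBm, Measure.restrict_restrict hBm,
      Set.inter_eq_left.2 hsub] using h
  have hμ : ∫ ω, Set.indicator B (fun z => z j - x j) (X ω) ∂P =
      ∫ z in B, max (f z) 0 * (z j - x j) := by
    rw [← integral_map (f := Set.indicator B (fun z => z j - x j)) hX.aemeasurable
      (hcoord.measurable.indicator hBm).aestronglyMeasurable, integral_indicator hBm, hdensB,
      integral_withDensity_eq_integral_toReal_smul (by fun_prop) (by simp)]
    simp [ENNReal.toReal_ofReal']
  have hzero : ∫ z in B, (z j - x j) = 0 := by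
    have h := integral_closedBall_coord x hτpos j continuous_id
    simpa using h
  have habs : ∫ z in B, |z j - x j| = (2 * τ) ^ (D - 1) * τ ^ 2 := by
    rw [integral_closedBall_coord x hτpos j continuous_abs, integral_abs_symm hτpos]
  have hcompact : IsCompact B := isCompact_closedBall x τ
  have hint : IntegrableOn (fun z : Fin D → ℝ => z j - x j) B :=
    hcoord.continuousOn.integrableOn_compact hcompact
  have hbound : ∀ z ∈ B, |(max (f z) 0 - max (f x) 0) * (z j - x j)| ≤ L * τ * |z j - x j| := by
    intro z hz
    rw [abs_mul]
    gcongr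
    have hzx : ‖z - x‖ ≤ τ := by simpa [hB, dist_eq_norm] using hz
    calc |max (f z) 0 - max (f x) 0| ≤ |f z - f x| := abs_max_sub_max_le_abs _ _ _
      _ ≤ L * ‖z - x‖ := hLip z (hsub hz)
      _ ≤ L * τ := by gcongr
  have hbint : IntegrableOn (fun z : Fin D → ℝ => L * τ * |z j - x j|) B := hint.abs.const_mul _
  have hdiff : IntegrableOn
      (fun z : Fin D → ℝ => (max (f z) 0 - max (f x) 0) * (z j - x j)) B := by
    refine Integrable.mono' hbint ?_ ?_
    · exact (((hf.max measurable_const).sub_const _).mul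
        hcoord.measurable).aestronglyMeasurable
    · exact (ae_restrict_iff' hBm).2 (ae_of_all _ hbound)
  have hcenter : ∫ z in B, max (f z) 0 * (z j - x j) =
      ∫ z in B, (max (f z) 0 - max (f x) 0) * (z j - x j) := by
    have h : ∀ z : Fin D → ℝ, max (f z) 0 * (z j - x j) =
        (max (f z) 0 - max (f x) 0) * (z j - x j) + max (f x) 0 * (z j - x j) := by
      intro z; ring
    simp_rw [h]
    rw [integral_add hdiff (hint.const_mul _), integral_const_mul, hzero]
    simp
  have hD : D = (D - 1) + 1 := by have := j.pos; omega
  rw [hμ, hcenter]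
  calc |∫ z in B, (max (f z) 0 - max (f x) 0) * (z j - x j)|
      ≤ ∫ z in B, L * τ * |z j - x j| := by
        rw [← Real.norm_eq_abs]
        exact norm_integral_le_of_norm_le hbint ((ae_restrict_iff' hBm).2 (ae_of_all _ hbound))
    _ = L * τ * ((2 * τ) ^ (D - 1) * τ ^ 2) := by rw [integral_const_mul, habs]
    _ = L / 8 * (2 * τ) ^ (2 + ((D - 1) + 1)) := by ring
    _ = L / 8 * (2 * τ) ^ (2 + D) := by rw [← hD]
end

section
/- Let X be a random vector in ℝ^D whose restriction to the ℓ∞-ball B(x,τ_0) has a Lebesgue density bounded below by b_f > 0 on B(x,τ_0). Then for any 0 < τ ≤ τ_0, the matrix inequality E[(X − x)(X − x)ᵀ 1_{B(x,τ)}(X)] ⪰ (b_f/12) (2τ)^{2+D} I_D holds in the positive semidefinite order, i.e. for every u ∈ ℝ^D, E[(uᵀ(X − x))² 1_{B(x,τ)}(X)] ≥ (b_f/12)(2τ)^{2+D} ‖u‖₂². -/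
open MeasureTheory

/-!
On the cube `B = closedBall x τ` the law of `X` dominates `b_f` times Lebesgue measure, so the
expectation is at least `b_f * ∫ z in B, (∑ j, u j * (z j - x j)) ^ 2`. Restricted Lebesgue measure
on the cube is a product measure, so by Fubini the centred coordinates are orthogonal there
(each has mean zero) and each has second moment `(2τ)^(D-1) * (2τ³/3) = (2τ)^(2+D) / 12`.
Expanding the square leaves only the diagonal terms.
-/

/-- Second moments of the centred coordinates over a cube: off-diagonal ones vanish by Fubini
and symmetry. -/
lemma integral_cube_mul (D : ℕ) (x : Fin D → ℝ) (τ : ℝ) (hτ : 0 < τ) (j k : Fin D) :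
    ∫ z in Metric.closedBall x τ, (z j - x j) * (z k - x k) =
      if j = k then (2 * τ) ^ (2 + D) / 12 else 0 := by
  have hprod : ∀ z : Fin D → ℝ, (z j - x j) * (z k - x k) =
      ∏ i, ((if i = j then z i - x i else 1) * (if i = k then z i - x i else 1)) := by
    intro z
    rw [Finset.prod_mul_distrib]
    simp
  simp_rw [hprod]
  rw [closedBall_pi x hτ.le, volume_pi, Measure.restrict_pi_pi,
    integral_fintype_prod_eq_prod (𝕜 := ℝ)
      (fun i t => (if i = j then t - x i else 1) * (if i = k then t - x i else 1))]
  -- each one-dimensional factor, as an interval integral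
  have hI : ∀ (i : Fin D) (g : ℝ → ℝ),
      ∫ t in Metric.closedBall (x i) τ, g (t - x i) = ∫ s in (-τ)..τ, g s := by
    intro i g
    rw [Real.closedBall_eq_Icc, integral_Icc_eq_integral_Ioc,
      ← intervalIntegral.integral_of_le (by linarith),
      intervalIntegral.integral_comp_sub_right]
    congr 1 <;> ring
  have h1 := fun i : Fin D => hI i (fun _ => 1)
  have h2 := fun i : Fin D => hI i (fun s => s)
  have h3 := fun i : Fin D => hI i (fun s => s * s)
  simp only [intervalIntegral.integral_const, integral_id, smul_eq_mul] at h1 h2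
  split_ifs with hjk
  · subst hjk
    have h3' : ∫ s in (-τ)..τ, s * s = 2 * τ ^ 3 / 3 := by
      simp_rw [← pow_two]
      rw [integral_pow]
      norm_num
      ring
    have : ∀ i, (∫ t in Metric.closedBall (x i) τ,
        (if i = j then t - x i else 1) * (if i = j then t - x i else 1)) =
        (2 * τ) * (if i = j then τ ^ 2 / 3 else 1) := by
      intro i
      by_cases hi : i = j
      · simp only [hi, if_true]
        rw [h3 j, h3']
        ring
      · simp only [hi, if_false, mul_one]
        rw [h1 i]
        ring
    simp_rw [this]
    rw [Finset.prod_mul_distrib]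
    simp
    ring
  · apply Finset.prod_eq_zero (Finset.mem_univ j)
    simp only [hjk, if_true, if_false, mul_one]
    rw [h2 j]
    ring

lemma integral_cube_sq (D : ℕ) (x : Fin D → ℝ) (τ : ℝ) (hτ : 0 < τ) (u : Fin D → ℝ) :
    ∫ z in Metric.closedBall x τ, (∑ j, u j * (z j - x j)) ^ 2 =
      (2 * τ) ^ (2 + D) / 12 * ∑ j, u j ^ 2 := by
  have hexp : ∀ z : Fin D → ℝ, (∑ j, u j * (z j - x j)) ^ 2 =
      ∑ j, ∑ k, (u j * u k) * ((z j - x j) * (z k - x k)) := by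
    intro z
    rw [pow_two, Finset.sum_mul_sum]
    refine Finset.sum_congr rfl fun j _ => Finset.sum_congr rfl fun k _ => by ring
  have hint : ∀ j k, Integrable (fun z : Fin D → ℝ => (u j * u k) * ((z j - x j) * (z k - x k)))
      (volume.restrict (Metric.closedBall x τ)) := fun j k =>
    (Continuous.continuousOn (by fun_prop)).integrableOn_compact (isCompact_closedBall x τ)
  simp_rw [hexp]
  rw [integral_finsetSum _ fun j _ => integrable_finsetSum _ fun k _ => hint j k,
    Finset.mul_sum]
  refine Finset.sum_congr rfl fun j _ => ?_
  rw [integral_finsetSum _ fun k _ => hint j k]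
  simp_rw [integral_const_mul, integral_cube_mul D x τ hτ]
  simp
  ring

/-- Let `X` be a random vector in `ℝ^D` whose restriction to the ℓ∞-ball
`B(x,τ_0)` has a Lebesgue density bounded below by `b_f > 0` on `B(x,τ_0)`. Then for any
`0 < τ ≤ τ_0`, `E[(X − x)(X − x)ᵀ 1_{B(x,τ)}(X)] ⪰ (b_f/12)(2τ)^{2+D} I_D` in the positive
semidefinite order, i.e. for every `u ∈ ℝ^D`,
`E[(uᵀ(X − x))² 1_{B(x,τ)}(X)] ≥ (b_f/12)(2τ)^{2+D} ‖u‖₂²`. -/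
theorem stmt_18 {Ω : Type*} [MeasurableSpace Ω] (P : Measure Ω) [IsProbabilityMeasure P]
    (D : ℕ) (x : Fin D → ℝ) (X : Ω → Fin D → ℝ) (hX : Measurable X)
    (τ0 b_f : ℝ) (hτ0 : 0 < τ0) (hb : 0 < b_f)
    (f : (Fin D → ℝ) → ℝ) (hf : Measurable f)
    (hdens : (Measure.map X P).restrict (Metric.closedBall x τ0) =
      ((volume : Measure (Fin D → ℝ)).restrict (Metric.closedBall x τ0)).withDensity
        fun z => ENNReal.ofReal (f z))
    (hlb : ∀ z ∈ Metric.closedBall x τ0, b_f ≤ f z)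
    (τ : ℝ) (hτpos : 0 < τ) (hττ0 : τ ≤ τ0) :
    ∀ u : Fin D → ℝ,
      b_f / 12 * (2 * τ) ^ (2 + D) * ∑ j, u j ^ 2 ≤
        ∫ ω, Set.indicator (Metric.closedBall x τ)
          (fun z => (∑ j, u j * (z j - x j)) ^ 2) (X ω) ∂P := by
  intro u
  set B := Metric.closedBall x τ with hB
  have hBm : MeasurableSet B := measurableSet_closedBall
  have hsub : B ⊆ Metric.closedBall x τ0 := Metric.closedBall_subset_closedBall hττ0
  have hQ : Continuous fun z : Fin D → ℝ => (∑ j, u j * (z j - x j)) ^ 2 := by fun_prop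
  have : IsProbabilityMeasure (Measure.map X P) := Measure.isProbabilityMeasure_map hX.aemeasurable
  have hle : ENNReal.ofReal b_f • volume.restrict B ≤ (Measure.map X P).restrict B := by
    rw [Measure.le_iff]
    intro s hs
    have hsB : MeasurableSet (s ∩ B) := hs.inter hBm
    have hsub' : s ∩ B ⊆ Metric.closedBall x τ0 := Set.inter_subset_right.trans hsub
    have e : (Measure.map X P) (s ∩ B) = ∫⁻ z in s ∩ B, ENNReal.ofReal (f z) := by
      rw [← Measure.restrict_eq_self (Measure.map X P) hsub', hdens, withDensity_apply _ hsB,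
        Measure.restrict_restrict hsB, Set.inter_eq_left.2 hsub']
    rw [Measure.smul_apply, Measure.restrict_apply hs, Measure.restrict_apply hs, e, smul_eq_mul,
      ← setLIntegral_const]
    exact setLIntegral_mono' hsB fun z hz => ENNReal.ofReal_le_ofReal (hlb z (hsub' hz))
  have hint : Integrable (fun z : Fin D → ℝ => (∑ j, u j * (z j - x j)) ^ 2)
      ((Measure.map X P).restrict B) :=
    hQ.continuousOn.integrableOn_compact (isCompact_closedBall x τ)
  rw [← integral_map (f := B.indicator fun z => (∑ j, u j * (z j - x j)) ^ 2) hX.aemeasurable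
    (hQ.measurable.indicator hBm).aestronglyMeasurable, integral_indicator hBm]
  have hmono := integral_mono_measure hle (Filter.Eventually.of_forall fun z => sq_nonneg _) hint
  rw [integral_smul_measure, ENNReal.toReal_ofReal hb.le, integral_cube_sq D x τ hτpos,
    smul_eq_mul] at hmono
  refine le_trans (le_of_eq ?_) hmono
  ring
end
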